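/- Suppose λ is a partition of n that is not hook-shaped and not self-transpose, and suppose |SYT(λ)| = 2^d for some natural number d. Then there is no bijection φ : SYT(λ) → F_2^d (where F_2 is the field with two elements) under which every Bender–Knuth involution t_1,…,t_{n−1} acts on F_2^d as an affine transformation; equivalently, under no identification of SYT(λ) with F_2^d is the image of C_n contained in the affine group AGL(d, 2). -/

import Mathlib

/-!
Write `s = t_2 ∘ t_3`. It only rearranges the entries `2, 3, 4`, and its action on a tableau
depends only on the subtableau of shape `ν ⊢ 4` formed by the entries `1, …, 4`:

* for `ν = (4)` or `(1⁴)` both involutions act trivially;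
* for `ν = (3,1)` or `(2,1,1)` the three subtableaux are permuted cyclically by `s`;
* for `ν = (2,2)` the involution `t_3` is trivial and `t_2` exchanges the two subtableaux.

Hence every tableau is fixed by `s²` or by `s³` (`sq_or_cube`). If `μ` contains the box `(1,1)` and
is not the `2 × 2` square, then subtableaux of the second and of the third kind both occur
(`exists_type_square`, `exists_type_bent`), so neither `s²` nor `s³` is the identity.

No affine transformation of an `𝔽₂`-vector space behaves like this
(`no_ternary_affine`). If `x` is moved by `s²`, then `s³ x = x`, and `p = x + s x + s² x` is fixed
by `s`, an affine map preserving sums of three vectors. If `y` is moved by `s³`, then `s² y = y`,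
and `x + y + p` is moved by both `s²` and `s³`, a contradiction.

The subtableaux are handled only through the relative position of the boxes of `2, 3, 4`, which
makes the argument invariant under transposition.
-/

/-- A standard Young tableau of shape `μ`: a filling of the cells of `μ` by the
numbers `1, …, μ.card` (bijectively), strictly increasing along rows and columns,
with value `0` outside the diagram. -/
structure SYT (μ : YoungDiagram) where
  entry : ℕ → ℕ → ℕ
  zero_outside : ∀ i j, (i, j) ∉ μ → entry i j = 0
  row_strict : ∀ i j1 j2, j1 < j2 → (i, j2) ∈ μ → entry i j1 < entry i j2
  col_strict : ∀ i1 i2 j, i1 < i2 → (i2, j) ∈ μ → entry i1 j < entry i2 j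
  image_eq : μ.cells.image (fun c => entry c.1 c.2) = Finset.Icc 1 μ.card

theorem SYT.ext' {μ : YoungDiagram} {A B : SYT μ} (h : A.entry = B.entry) : A = B := by
  cases A; cases B; simp_all

/-- The involution of values swapping `k` and `k + 1`. -/
def swapVal (k x : ℕ) : ℕ := if x = k then k + 1 else if x = k + 1 then k else x

theorem swapVal_invol (k : ℕ) : Function.Involutive (swapVal k) := by
  intro x; unfold swapVal; split_ifs <;> omega

open Classical in
/-- The Bender–Knuth involution `t_k` as a function: interchange the entries `k` and
`k + 1` if the result is again a standard Young tableau, and do nothing otherwise. -/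
noncomputable def bkFun (μ : YoungDiagram) (k : ℕ) (T : SYT μ) : SYT μ :=
  if h : ∃ T' : SYT μ, T'.entry = fun i j => swapVal k (T.entry i j) then h.choose else T

theorem bkFun_pos {μ : YoungDiagram} {k : ℕ} {T : SYT μ}
    (h : ∃ T' : SYT μ, T'.entry = fun i j => swapVal k (T.entry i j)) :
    (bkFun μ k T).entry = fun i j => swapVal k (T.entry i j) := by
  unfold bkFun; rw [dif_pos h]; exact h.choose_spec

theorem bkFun_neg {μ : YoungDiagram} {k : ℕ} {T : SYT μ}
    (h : ¬ ∃ T' : SYT μ, T'.entry = fun i j => swapVal k (T.entry i j)) :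
    bkFun μ k T = T := by
  unfold bkFun; rw [dif_neg h]

theorem bkFun_invol (μ : YoungDiagram) (k : ℕ) : Function.Involutive (bkFun μ k) := by
  intro T
  by_cases h : ∃ T' : SYT μ, T'.entry = fun i j => swapVal k (T.entry i j)
  · have e1 : (bkFun μ k T).entry = fun i j => swapVal k (T.entry i j) := bkFun_pos h
    have h2 : ∃ T'' : SYT μ, T''.entry = fun i j => swapVal k ((bkFun μ k T).entry i j) := by
      refine ⟨T, ?_⟩
      funext i j
      simp only [e1]
      exact (swapVal_invol k (T.entry i j)).symm
    apply SYT.ext'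
    rw [bkFun_pos h2]
    funext i j
    simp only [e1]
    exact swapVal_invol k (T.entry i j)
  · rw [bkFun_neg h, bkFun_neg h]

/-- The Bender–Knuth involution `t_k` as a permutation of `SYT μ`. -/
noncomputable def BK (μ : YoungDiagram) (k : ℕ) : Equiv.Perm (SYT μ) :=
  (bkFun_invol μ k).toPerm

/-- The image of the cactus group `C_n` in the permutation group of `SYT μ`:
the subgroup generated by the Bender–Knuth involutions `t_1, …, t_{n-1}`. -/
noncomputable def BKgroup (μ : YoungDiagram) : Subgroup (Equiv.Perm (SYT μ)) :=
  Subgroup.closure (BK μ '' Set.Icc 1 (μ.card - 1))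

/-- The simultaneous Bender–Knuth involution `t_k` on pairs of tableaux. -/
noncomputable def BKpair (μ1 μ2 : YoungDiagram) (k : ℕ) : Equiv.Perm (SYT μ1 × SYT μ2) :=
  Equiv.prodCongr (BK μ1 k) (BK μ2 k)

/-- The image of the cactus group acting diagonally on pairs of tableaux. -/
noncomputable def BKpairGroup (μ1 μ2 : YoungDiagram) : Subgroup (Equiv.Perm (SYT μ1 × SYT μ2)) :=
  Subgroup.closure (BKpair μ1 μ2 '' Set.Icc 1 (μ1.card - 1))

/-- The simultaneous Bender–Knuth involution `t_k` on triples of tableaux. -/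
noncomputable def BKtriple (μ1 μ2 μ3 : YoungDiagram) (k : ℕ) :
    Equiv.Perm (SYT μ1 × SYT μ2 × SYT μ3) :=
  Equiv.prodCongr (BK μ1 k) (Equiv.prodCongr (BK μ2 k) (BK μ3 k))

/-- The image of the cactus group acting diagonally on triples of tableaux. -/
noncomputable def BKtripleGroup (μ1 μ2 μ3 : YoungDiagram) :
    Subgroup (Equiv.Perm (SYT μ1 × SYT μ2 × SYT μ3)) :=
  Subgroup.closure (BKtriple μ1 μ2 μ3 '' Set.Icc 1 (μ1.card - 1))

/-- A partition is hook-shaped if its diagram has no box in position `(2,2)`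
(in 1-indexed terms), i.e. no cell `(1,1)` in 0-indexed terms. -/
def HookShaped (μ : YoungDiagram) : Prop := (1, 1) ∉ μ

/-- A partition is almost hook-shaped if it is a hook plus the single box `(2,2)`. -/
def AlmostHookShaped (μ : YoungDiagram) : Prop :=
  (1, 1) ∈ μ ∧ (1, 2) ∉ μ ∧ (2, 1) ∉ μ

/-- The value `k` occurs in the first row of `A`. -/
def SYT.inFirstRow {μ : YoungDiagram} (A : SYT μ) (k : ℕ) : Prop :=
  ∃ j, (0, j) ∈ μ ∧ A.entry 0 j = k

open scoped Classical in
/-- The set `S_{A,B}` of values lying in the first row of both `A` and `B`. -/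
noncomputable def sharedFirstRow {μ1 μ2 : YoungDiagram} (A : SYT μ1) (B : SYT μ2) : Finset ℕ :=
  (Finset.Icc 1 μ1.card).filter (fun k => A.inFirstRow k ∧ B.inFirstRow k)

/-- Tableaux (possibly of different shapes) are equal, as fillings of the plane. -/
def EqTab {μ1 μ2 : YoungDiagram} (A : SYT μ1) (B : SYT μ2) : Prop := A.entry = B.entry

/-- `B` is the transpose of `A`. -/
def EqTransposeTab {μ1 μ2 : YoungDiagram} (A : SYT μ1) (B : SYT μ2) : Prop :=
  ∀ i j, B.entry i j = A.entry j i

/-- A pair of partitions of the same `n` is viable if at most one of them is hook-shaped. -/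
def ViablePairShape (μ1 μ2 : YoungDiagram) : Prop := ¬ (HookShaped μ1 ∧ HookShaped μ2)

/-- A pair of tableaux is viable if the pair of shapes is viable, the tableaux are
different and not transposes of each other. -/
def ViableTabPair {μ1 μ2 : YoungDiagram} (A : SYT μ1) (B : SYT μ2) : Prop :=
  ViablePairShape μ1 μ2 ∧ ¬ EqTab A B ∧ ¬ EqTransposeTab A B

/-- A pair of partitions is base case if it is viable and either both are almost
hook-shaped or one is almost hook-shaped and the other is hook-shaped. -/
def BaseCasePair (μ1 μ2 : YoungDiagram) : Prop :=
  ViablePairShape μ1 μ2 ∧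
    ((AlmostHookShaped μ1 ∧ AlmostHookShaped μ2) ∨
      (AlmostHookShaped μ1 ∧ HookShaped μ2) ∨ (HookShaped μ1 ∧ AlmostHookShaped μ2))

/-- A triple of partitions is viable if at most one of them is hook-shaped. -/
def ViableTripleShape (μ1 μ2 μ3 : YoungDiagram) : Prop :=
  ¬ (HookShaped μ1 ∧ HookShaped μ2) ∧ ¬ (HookShaped μ1 ∧ HookShaped μ3) ∧
    ¬ (HookShaped μ2 ∧ HookShaped μ3)

/-- A triple of tableaux is viable if the shapes are viable, no two of the tableaux
are equal and no two are transposes of each other. -/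
def ViableTabTriple {μ1 μ2 μ3 : YoungDiagram} (A : SYT μ1) (B : SYT μ2) (C : SYT μ3) : Prop :=
  ViableTripleShape μ1 μ2 μ3 ∧
    (¬ EqTab A B ∧ ¬ EqTab A C ∧ ¬ EqTab B C) ∧
    (¬ EqTransposeTab A B ∧ ¬ EqTransposeTab A C ∧ ¬ EqTransposeTab B C)

/-- A triple of partitions is base case if it is viable and either two of them are
almost hook-shaped, or one is almost hook-shaped and another one is hook-shaped. -/
def BaseCaseTriple (μ1 μ2 μ3 : YoungDiagram) : Prop :=
  ViableTripleShape μ1 μ2 μ3 ∧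
    ((AlmostHookShaped μ1 ∧ AlmostHookShaped μ2) ∨ (AlmostHookShaped μ1 ∧ AlmostHookShaped μ3) ∨
      (AlmostHookShaped μ2 ∧ AlmostHookShaped μ3) ∨
      (AlmostHookShaped μ1 ∧ (HookShaped μ2 ∨ HookShaped μ3)) ∨
      (AlmostHookShaped μ2 ∧ (HookShaped μ1 ∨ HookShaped μ3)) ∨
      (AlmostHookShaped μ3 ∧ (HookShaped μ1 ∨ HookShaped μ2)))

/-- `A'` is the tableau obtained from `A` by deleting the box containing the largest
entry `n = μ.card`: its shape is contained in that of `A`, has one box fewer, and its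
entries agree with those of `A`. -/
def IsRestriction {μ ν : YoungDiagram} (A : SYT μ) (A' : SYT ν) : Prop :=
  ν.cells ⊆ μ.cells ∧ ν.card + 1 = μ.card ∧ ∀ c ∈ ν.cells, A'.entry c.1 c.2 = A.entry c.1 c.2

/-- A box `c` of `μ` is a corner if some standard Young tableau of shape `μ` has the
largest entry `n = μ.card` in that box. -/
def IsCornerBox (μ : YoungDiagram) (c : ℕ × ℕ) : Prop :=
  c ∈ μ ∧ ∃ A : SYT μ, A.entry c.1 c.2 = μ.card

/-- `μ` has at least two corners. -/
def HasTwoCorners (μ : YoungDiagram) : Prop :=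
  ∃ c c' : ℕ × ℕ, c ≠ c' ∧ IsCornerBox μ c ∧ IsCornerBox μ c'

/-- The number of fixed points of a permutation of `SYT μ`. -/
noncomputable def fixedCount {μ : YoungDiagram} (g : Equiv.Perm (SYT μ)) : ℕ :=
  Nat.card {A : SYT μ // g A = A}

/-- A map `s` of an abelian group that preserves sums of three elements (as affine maps of
`𝔽₂`-vector spaces do) and all of whose points have period dividing `2` or `3` satisfies `s² = 1`
or `s³ = 1`. -/
theorem no_ternary_affine {V : Type*} [AddCommGroup V] (s : V → V)
    (hs : ∀ a b c, s (a + b + c) = s a + s b + s c)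
    (h : ∀ a, s (s a) = a ∨ s (s (s a)) = a)
    (x y : V) (hx : s (s x) ≠ x) (hy : s (s (s y)) ≠ y) : False := by
  have hx3 : s (s (s x)) = x := (h x).resolve_left hx
  have hy2 : s (s y) = y := (h y).resolve_right hy
  obtain ⟨p, hp⟩ : ∃ p, s p = p := by
    refine ⟨x + s x + s (s x), ?_⟩
    rw [hs, hx3]
    abel
  rcases h (x + y + p) with h' | h'
  · simp only [hs, hp, hy2] at h'
    exact hx (add_right_cancel (add_right_cancel h'))
  · simp only [hs, hp, hx3] at h'
    exact hy (add_left_cancel (add_right_cancel h'))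

/-! ### Positions of entries and the effect of a Bender–Knuth involution -/

/-- Two boxes lie in a common row or a common column. -/
def Collinear2 (p q : ℕ × ℕ) : Prop := p.1 = q.1 ∨ p.2 = q.2

theorem SYT.mem_of_entry {μ : YoungDiagram} (T : SYT μ) {p : ℕ × ℕ} (h : T.entry p.1 p.2 ≠ 0) :
    p ∈ μ := by
  by_contra hp
  exact h (T.zero_outside p.1 p.2 hp)

theorem SYT.entry_mem {μ : YoungDiagram} (T : SYT μ) {p : ℕ × ℕ} (h : p ∈ μ) :
    1 ≤ T.entry p.1 p.2 ∧ T.entry p.1 p.2 ≤ μ.card := by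
  have : T.entry p.1 p.2 ∈ Finset.Icc 1 μ.card := by
    rw [← T.image_eq]
    exact Finset.mem_image_of_mem (fun c : ℕ × ℕ => T.entry c.1 c.2) ((YoungDiagram.mem_cells _).2 h)
  simpa using this

theorem SYT.inj {μ : YoungDiagram} (T : SYT μ) {p q : ℕ × ℕ}
    (h : T.entry p.1 p.2 = T.entry q.1 q.2) (h0 : T.entry q.1 q.2 ≠ 0) : p = q := by
  have hc : (μ.cells.image (fun c => T.entry c.1 c.2)).card = μ.cells.card := by
    rw [T.image_eq]; simp
  exact Finset.card_image_iff.1 hc ((YoungDiagram.mem_cells _).2 (T.mem_of_entry (h ▸ h0)))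
    ((YoungDiagram.mem_cells _).2 (T.mem_of_entry h0)) h

theorem SYT.exists_pos {μ : YoungDiagram} (T : SYT μ) {v : ℕ} (h1 : 1 ≤ v) (h2 : v ≤ μ.card) :
    ∃ p : ℕ × ℕ, T.entry p.1 p.2 = v := by
  have : v ∈ μ.cells.image (fun c => T.entry c.1 c.2) := by
    rw [T.image_eq]; simp [h1, h2]
  obtain ⟨p, -, hp⟩ := Finset.mem_image.1 this
  exact ⟨p, hp⟩

theorem SYT.entry_up {μ : YoungDiagram} (T : SYT μ) {i j v : ℕ} (h : T.entry (i + 1) j = v)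
    (hv : v ≠ 0) : 1 ≤ T.entry i j ∧ T.entry i j < v := by
  have hm : (i + 1, j) ∈ μ := T.mem_of_entry (p := (i + 1, j)) (by simpa [h] using hv)
  exact ⟨(T.entry_mem (p := (i, j)) (μ.up_left_mem (Nat.le_succ i) le_rfl hm)).1,
    h ▸ T.col_strict i (i + 1) j (Nat.lt_succ_self i) hm⟩

theorem SYT.entry_left {μ : YoungDiagram} (T : SYT μ) {i j v : ℕ} (h : T.entry i (j + 1) = v)
    (hv : v ≠ 0) : 1 ≤ T.entry i j ∧ T.entry i j < v := by
  have hm : (i, j + 1) ∈ μ := T.mem_of_entry (p := (i, j + 1)) (by simpa [h] using hv)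
  exact ⟨(T.entry_mem (p := (i, j)) (μ.up_left_mem le_rfl (Nat.le_succ j) hm)).1,
    h ▸ T.row_strict i j (j + 1) (Nat.lt_succ_self j) hm⟩

theorem swapVal_lt {k a b : ℕ} (h : a < b) (hk : ¬ (a = k ∧ b = k + 1)) :
    swapVal k a < swapVal k b := by
  unfold swapVal; split_ifs <;> omega

theorem bk_of_not_collinear {μ : YoungDiagram} {T : SYT μ} {k : ℕ} (hk : 1 ≤ k) {p q : ℕ × ℕ}
    (hp : T.entry p.1 p.2 = k) (hq : T.entry q.1 q.2 = k + 1) (h : ¬ Collinear2 p q) :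
    (BK μ k T).entry = fun i j => swapVal k (T.entry i j) := by
  have hn : k + 1 ≤ μ.card := by
    rw [← hq]
    exact (T.entry_mem (T.mem_of_entry (by rw [hq]; omega))).2
  have key : ∀ c d : ℕ × ℕ, T.entry c.1 c.2 = k ∧ T.entry d.1 d.2 = k + 1 → ¬ Collinear2 c d := by
    rintro c d ⟨hc, hd⟩
    have e1 : c = p := T.inj (hc.trans hp.symm) (by rw [hp]; omega)
    have e2 : d = q := T.inj (hd.trans hq.symm) (by rw [hq]; omega)
    rwa [e1, e2]
  refine bkFun_pos ⟨⟨fun i j => swapVal k (T.entry i j), ?_, ?_, ?_, ?_⟩, rfl⟩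
  · intro i j hij
    have := T.zero_outside i j hij
    change swapVal k (T.entry i j) = 0
    rw [this, swapVal, if_neg (by omega), if_neg (by omega)]
  · intro i j1 j2 hj hm
    exact swapVal_lt (T.row_strict i j1 j2 hj hm) fun hc => key (i, j1) (i, j2) hc (Or.inl rfl)
  · intro i1 i2 j hi hm
    exact swapVal_lt (T.col_strict i1 i2 j hi hm) fun hc => key (i1, j) (i2, j) hc (Or.inr rfl)
  · have : μ.cells.image (fun c => swapVal k (T.entry c.1 c.2)) =
        (μ.cells.image (fun c => T.entry c.1 c.2)).image (swapVal k) := by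
      rw [Finset.image_image]; rfl
    rw [this, T.image_eq]
    have hsub : ∀ v ∈ Finset.Icc 1 μ.card, swapVal k v ∈ Finset.Icc 1 μ.card := by
      intro v hv
      rw [Finset.mem_Icc] at hv ⊢
      unfold swapVal; split_ifs <;> omega
    ext v
    constructor
    · intro hv
      obtain ⟨u, hu, rfl⟩ := Finset.mem_image.1 hv
      exact hsub u hu
    · intro hv
      exact Finset.mem_image.2 ⟨swapVal k v, hsub v hv, swapVal_invol k v⟩

theorem bk_of_collinear {μ : YoungDiagram} {T : SYT μ} {k : ℕ} (hk : 1 ≤ k) {p q : ℕ × ℕ}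
    (hp : T.entry p.1 p.2 = k) (hq : T.entry q.1 q.2 = k + 1) (h : Collinear2 p q) :
    BK μ k T = T := by
  refine bkFun_neg ?_
  rintro ⟨T', hT'⟩
  have hpm : p ∈ μ := T.mem_of_entry (by omega)
  have hqm : q ∈ μ := T.mem_of_entry (by omega)
  have hp' : T'.entry p.1 p.2 = k + 1 := by rw [hT']; simp [swapVal, hp]
  have hq' : T'.entry q.1 q.2 = k := by rw [hT']; simp [swapVal, hq]
  obtain ⟨i, j⟩ := p
  obtain ⟨i', j'⟩ := q
  simp only [Collinear2] at *
  -- The entries `k, k + 1` are in the wrong order along the common line in one of `T`, `T'`.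
  rcases h with rfl | rfl
  · rcases lt_trichotomy j j' with hj | rfl | hj
    · have := T'.row_strict i j j' hj hqm; omega
    · omega
    · have := T.row_strict i j' j hj hpm; omega
  · rcases lt_trichotomy i i' with hi | rfl | hi
    · have := T'.col_strict i i' j hi hqm; omega
    · omega
    · have := T.col_strict i' i j hi hpm; omega

theorem BK_BK {μ : YoungDiagram} (k : ℕ) (T : SYT μ) : BK μ k (BK μ k T) = T :=
  bkFun_invol μ k T

/-- The entries `2, 3, 4` of `T` are in the boxes `a, b, c` respectively. -/
def Pos {μ : YoungDiagram} (T : SYT μ) (a b c : ℕ × ℕ) : Prop :=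
  T.entry a.1 a.2 = 2 ∧ T.entry b.1 b.2 = 3 ∧ T.entry c.1 c.2 = 4

variable {μ : YoungDiagram} {T : SYT μ} {a b c : ℕ × ℕ}

theorem Pos.swap2 (h : Pos T a b c) (hab : ¬ Collinear2 a b) : Pos (BK μ 2 T) b a c := by
  have e := bk_of_not_collinear (by norm_num) h.1 h.2.1 hab
  simp [Pos, e, h.1, h.2.1, h.2.2, swapVal]

theorem Pos.swap3 (h : Pos T a b c) (hbc : ¬ Collinear2 b c) : Pos (BK μ 3 T) a c b := by
  have e := bk_of_not_collinear (by norm_num) h.2.1 h.2.2 hbc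
  simp [Pos, e, h.1, h.2.1, h.2.2, swapVal]

theorem Pos.fix2 (h : Pos T a b c) (hab : Collinear2 a b) : BK μ 2 T = T :=
  bk_of_collinear (by norm_num) h.1 h.2.1 hab

theorem Pos.fix3 (h : Pos T a b c) (hbc : Collinear2 b c) : BK μ 3 T = T :=
  bk_of_collinear (by norm_num) h.2.1 h.2.2 hbc

theorem Collinear2.symm (h : Collinear2 a b) : Collinear2 b a :=
  h.imp Eq.symm Eq.symm

/-- The permutation `t_2 ∘ t_3` of the standard Young tableaux. -/
noncomputable def bkStep (μ : YoungDiagram) (T : SYT μ) : SYT μ := BK μ 2 (BK μ 3 T)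

/-! ### Periods of `t_2 ∘ t_3` according to the positions of `2, 3, 4` -/

/-- Shape `(4)` or `(1⁴)`. -/
theorem Pos.period_line (h : Pos T a b c) (hab : Collinear2 a b) (hbc : Collinear2 b c) :
    bkStep μ (bkStep μ T) = T := by
  simp [bkStep, h.fix2 hab, h.fix3 hbc]

/-- Shape `(2,2)`; `c` is the box `(1,1)`. -/
theorem Pos.period_square (h : Pos T a b c) (hab : ¬ Collinear2 a b) (hbc : Collinear2 b c)
    (hac : Collinear2 a c) :
    bkStep μ (bkStep μ T) = T ∧ bkStep μ (bkStep μ (bkStep μ T)) ≠ T := by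
  have h' := h.swap2 hab
  have e1 := h.fix3 hbc
  have e2 := h'.fix3 hac
  have e3 : bkStep μ (bkStep μ T) = T := by simp [bkStep, e1, e2, BK_BK]
  refine ⟨e3, ?_⟩
  rw [e3]
  intro e
  rw [bkStep, e1] at e
  have h2 := h'.1
  rw [e] at h2
  exact absurd (h2.symm.trans h.2.1) (by norm_num)

/-- The cycle of `t_2 ∘ t_3` for shapes `(3,1)` and `(2,1,1)`: here `a` is the box of the short
arm, while `b` and `c` are on the long arm. -/
theorem Pos.cycle_bent (h : Pos T a b c) (hab : ¬ Collinear2 a b) (hbc : Collinear2 b c)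
    (hac : ¬ Collinear2 a c) :
    bkStep μ T = BK μ 2 T ∧ bkStep μ (BK μ 2 T) = BK μ 3 (BK μ 2 T) ∧
      bkStep μ (BK μ 3 (BK μ 2 T)) = T ∧ Pos (BK μ 3 (BK μ 2 T)) b c a := by
  have h1 := h.swap2 hab
  have h2 := h1.swap3 hac
  refine ⟨?_, ?_, ?_, h2⟩
  · rw [bkStep, h.fix3 hbc]
  · rw [bkStep, h2.fix2 hbc]
  · rw [bkStep, BK_BK, BK_BK]

/-- Shapes `(3,1)` and `(2,1,1)`, with the entry `2` on the short arm. -/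
theorem Pos.period_bent2 (h : Pos T a b c) (hab : ¬ Collinear2 a b) (hbc : Collinear2 b c)
    (hac : ¬ Collinear2 a c) :
    bkStep μ (bkStep μ (bkStep μ T)) = T ∧ bkStep μ (bkStep μ T) ≠ T := by
  obtain ⟨e1, e2, e3, hP⟩ := h.cycle_bent hab hbc hac
  refine ⟨by rw [e1, e2, e3], ?_⟩
  rw [e1, e2]
  intro e
  rw [e] at hP
  exact absurd (hP.1.symm.trans h.2.1) (by norm_num)

/-- Shapes `(3,1)` and `(2,1,1)`, with the entry `3` on the short arm. -/
theorem Pos.period_bent3 (h : Pos T b a c) (hab : ¬ Collinear2 b a) (hbc : Collinear2 b c)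
    (hac : ¬ Collinear2 a c) :
    bkStep μ (bkStep μ (bkStep μ T)) = T := by
  obtain ⟨e1, e2, e3, -⟩ := (h.swap2 hab).cycle_bent (fun h => hab h.symm) hbc hac
  rw [BK_BK] at e1 e2 e3
  rw [e2, e3, e1]

/-- Shapes `(3,1)` and `(2,1,1)`, with the entry `4` on the short arm. -/
theorem Pos.period_bent4 (h : Pos T b c a) (hab : ¬ Collinear2 b a) (hbc : Collinear2 b c)
    (hac : ¬ Collinear2 c a) :
    bkStep μ (bkStep μ (bkStep μ T)) = T := by
  obtain ⟨e1, e2, e3, -⟩ := ((h.swap3 hac).swap2 hab).cycle_bent (fun h => hab h.symm) hbc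
    (fun h => hac h.symm)
  rw [BK_BK] at e1 e2 e3
  rw [BK_BK] at e2 e3
  rw [e3, e1, e2]

/-- Every tableau is fixed by the square or by the cube of `t_2 ∘ t_3`. -/
theorem sq_or_cube (hn : 4 ≤ μ.card) (T : SYT μ) :
    bkStep μ (bkStep μ T) = T ∨ bkStep μ (bkStep μ (bkStep μ T)) = T := by
  obtain ⟨⟨i1, j1⟩, h1⟩ := T.exists_pos (v := 1) le_rfl (by omega)
  obtain ⟨⟨i2, j2⟩, h2⟩ := T.exists_pos (v := 2) (by omega) (by omega)
  obtain ⟨⟨i3, j3⟩, h3⟩ := T.exists_pos (v := 3) (by omega) (by omega)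
  obtain ⟨⟨i4, j4⟩, h4⟩ := T.exists_pos (v := 4) (by omega) hn
  have hP : Pos T (i2, j2) (i3, j3) (i4, j4) := ⟨h2, h3, h4⟩
  simp only at h1 h2 h3 h4
  have inj : ∀ {i j i' j' v w : ℕ}, T.entry i j = v → T.entry i' j' = w → w ≠ 0 → v = w →
      i = i' ∧ j = j' := by
    intro i j i' j' v w h h' hw e
    have := T.inj (p := (i, j)) (q := (i', j')) (by simp [h, h', e]) (by simpa [h'] using hw)
    simpa using this
  have up : ∀ {i j v : ℕ}, T.entry i j = v → v ≠ 0 → i = 0 ∨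
      ∃ i' u, i = i' + 1 ∧ T.entry i' j = u ∧ 1 ≤ u ∧ u < v := by
    intro i j v h hv
    rcases i with _ | i
    · exact Or.inl rfl
    · exact Or.inr ⟨i, _, rfl, rfl, T.entry_up h hv⟩
  have left : ∀ {i j v : ℕ}, T.entry i j = v → v ≠ 0 → j = 0 ∨
      ∃ j' u, j = j' + 1 ∧ T.entry i j' = u ∧ 1 ≤ u ∧ u < v := by
    intro i j v h hv
    rcases j with _ | j
    · exact Or.inl rfl
    · exact Or.inr ⟨j, _, rfl, rfl, T.entry_left h hv⟩
  have p1 : i1 = 0 ∧ j1 = 0 := by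
    constructor
    · rcases up h1 (by norm_num) with h | ⟨i, u, -, -, hu⟩ <;> omega
    · rcases left h1 (by norm_num) with h | ⟨i, u, -, -, hu⟩ <;> omega
  -- The box above, and the box to the left of, an entry `v` hold entries `u < v`.
  have preUp : ∀ {i j v : ℕ}, T.entry i j = v → v ≠ 0 → v ≤ 4 → i = 0 ∨
      (i = i1 + 1 ∧ j = j1 ∧ 1 < v) ∨ (i = i2 + 1 ∧ j = j2 ∧ 2 < v) ∨
      (i = i3 + 1 ∧ j = j3 ∧ 3 < v) := by
    intro i j v h hv hv4
    rcases up h hv with h | ⟨i', u, rfl, hu, hu1, huv⟩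
    · exact Or.inl h
    · have : u = 1 ∨ u = 2 ∨ u = 3 := by omega
      rcases this with e | e | e
      · have := inj hu h1 (by norm_num) e; omega
      · have := inj hu h2 (by norm_num) e; omega
      · have := inj hu h3 (by norm_num) e; omega
  have preLeft : ∀ {i j v : ℕ}, T.entry i j = v → v ≠ 0 → v ≤ 4 → j = 0 ∨
      (j = j1 + 1 ∧ i = i1 ∧ 1 < v) ∨ (j = j2 + 1 ∧ i = i2 ∧ 2 < v) ∨
      (j = j3 + 1 ∧ i = i3 ∧ 3 < v) := by
    intro i j v h hv hv4
    rcases left h hv with h | ⟨i', u, rfl, hu, hu1, huv⟩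
    · exact Or.inl h
    · have : u = 1 ∨ u = 2 ∨ u = 3 := by omega
      rcases this with e | e | e
      · have := inj hu h1 (by norm_num) e; omega
      · have := inj hu h2 (by norm_num) e; omega
      · have := inj hu h3 (by norm_num) e; omega
  have ne : ∀ {i j i' j' v w : ℕ}, T.entry i j = v → T.entry i' j' = w → v ≠ w →
      ¬ (i = i' ∧ j = j') := by
    rintro i j i' j' v w h h' hvw ⟨rfl, rfl⟩
    exact hvw (h.symm.trans h')
  have n12 := ne h1 h2 (by norm_num)
  have n13 := ne h1 h3 (by norm_num)
  have n14 := ne h1 h4 (by norm_num)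
  have n23 := ne h2 h3 (by norm_num)
  have n24 := ne h2 h4 (by norm_num)
  have n34 := ne h3 h4 (by norm_num)
  have u2 := preUp h2 (by norm_num) (by norm_num)
  have l2 := preLeft h2 (by norm_num) (by norm_num)
  have u3 := preUp h3 (by norm_num) (by norm_num)
  have l3 := preLeft h3 (by norm_num) (by norm_num)
  have u4 := preUp h4 (by norm_num) (by norm_num)
  have l4 := preLeft h4 (by norm_num) (by norm_num)
  clear preUp preLeft up left inj ne h1 h2 h3 h4
  obtain ⟨rfl, rfl⟩ := p1
  have c2 : (i2 = 0 ∧ j2 = 1) ∨ (i2 = 1 ∧ j2 = 0) := by omega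
  -- For each of the ten standard tableaux with four boxes, the relative position of `2, 3, 4`
  -- is one of the five treated above.
  by_cases hab : Collinear2 (i2, j2) (i3, j3) <;> by_cases hbc : Collinear2 (i3, j3) (i4, j4)
  · exact Or.inl (hP.period_line hab hbc)
  · refine Or.inr (hP.period_bent4 ?_ hab hbc)
    simp only [Collinear2] at *
    rcases c2 with ⟨rfl, rfl⟩ | ⟨rfl, rfl⟩ <;> omega
  · by_cases hac : Collinear2 (i2, j2) (i4, j4)
    · exact Or.inl (hP.period_square hab hbc hac).1
    · exact Or.inr (hP.period_bent2 hab hbc hac).1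
  · refine Or.inr (hP.period_bent3 hab ?_ hbc)
    simp only [Collinear2] at *
    rcases c2 with ⟨rfl, rfl⟩ | ⟨rfl, rfl⟩ <;> omega

/-! ### Existence of tableaux with prescribed first entries -/

/-- A weight on the boxes that is injective and strictly increasing along rows and columns yields
a standard Young tableau: number the boxes by increasing weight. If the weights `0, …, k` all
occur, then the box of weight `k` gets the number `k + 1`. -/
theorem exists_of_weight (w : ℕ × ℕ → ℕ) (hw : Function.Injective w)
    (hr : ∀ i j1 j2, j1 < j2 → w (i, j1) < w (i, j2))
    (hc : ∀ i1 i2 j, i1 < i2 → w (i1, j) < w (i2, j)) :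
    ∃ T : SYT μ, ∀ p ∈ μ, (∀ v ≤ w p, ∃ q ∈ μ, w q = v) → T.entry p.1 p.2 = w p + 1 := by
  classical
  let r : ℕ × ℕ → ℕ := fun p => (μ.cells.filter (fun q => w q ≤ w p)).card
  have hmono : ∀ p q, q ∈ μ → w p < w q → r p < r q := by
    intro p q hq hpq
    refine Finset.card_lt_card ⟨fun x hx => ?_, fun hsub => ?_⟩
    · simp only [Finset.mem_filter] at hx ⊢
      exact ⟨hx.1, hx.2.trans hpq.le⟩
    · have := hsub (Finset.mem_filter.2 ⟨(YoungDiagram.mem_cells _).2 hq, le_rfl⟩)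
      have := (Finset.mem_filter.1 this).2
      omega
  have hlow : ∀ {i j i' j' : ℕ}, i ≤ i' → j ≤ j' → (i', j') ∈ μ → (i, j) ∈ μ :=
    fun hi hj hm => μ.up_left_mem hi hj hm
  have hinj : Set.InjOn r μ.cells := by
    intro p hp q hq hpq
    rcases lt_trichotomy (w p) (w q) with h | h | h
    · exact absurd hpq (hmono p q ((YoungDiagram.mem_cells _).1 hq) h).ne
    · exact hw h
    · exact absurd hpq (hmono q p ((YoungDiagram.mem_cells _).1 hp) h).ne'
  refine ⟨⟨fun i j => if (i, j) ∈ μ then r (i, j) else 0, ?_, ?_, ?_, ?_⟩, ?_⟩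
  · intro i j h
    simp [h]
  · intro i j1 j2 hj hm
    have hm1 : (i, j1) ∈ μ := hlow le_rfl hj.le hm
    simp only [hm, hm1, if_true]
    exact hmono _ _ hm (hr i j1 j2 hj)
  · intro i1 i2 j hi hm
    have hm1 : (i1, j) ∈ μ := hlow hi.le le_rfl hm
    simp only [hm, hm1, if_true]
    exact hmono _ _ hm (hc i1 i2 j hi)
  · have e : μ.cells.image (fun c => if (c.1, c.2) ∈ μ then r (c.1, c.2) else 0) =
        μ.cells.image r := by
      refine Finset.image_congr fun p hp => ?_
      have hp' : (p.1, p.2) ∈ μ := (YoungDiagram.mem_cells _).1 hp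
      simp only [hp', if_true]
    rw [e]
    refine Finset.eq_of_subset_of_card_le ?_ ?_
    · intro v hv
      obtain ⟨p, hp, rfl⟩ := Finset.mem_image.1 hv
      rw [Finset.mem_Icc]
      exact ⟨Finset.card_pos.2 ⟨p, Finset.mem_filter.2 ⟨hp, le_rfl⟩⟩,
        Finset.card_le_card (Finset.filter_subset _ _)⟩
    · rw [Finset.card_image_of_injOn hinj]
      simp
  · intro p hp hall
    have hp' : (p.1, p.2) ∈ μ := hp
    simp only [hp', if_true]
    change (μ.cells.filter (fun q => w q ≤ w p)).card = w p + 1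
    rw [← Finset.card_image_of_injective _ hw, ← Finset.card_range (w p + 1)]
    congr 1
    ext v
    simp only [Finset.mem_image, Finset.mem_filter, Finset.mem_range, Nat.lt_succ_iff]
    constructor
    · rintro ⟨q, ⟨-, hq⟩, rfl⟩
      exact hq
    · intro hv
      obtain ⟨q, hq, rfl⟩ := hall v hv
      exact ⟨q, ⟨(YoungDiagram.mem_cells _).2 hq, hv⟩, rfl⟩

/-- If the boxes `(0,0), a, b, c` of `μ` can be filled first, in this order, there is a tableau with
`2, 3, 4` in `a, b, c`. The hypothesis `hlow` says that the boxes weakly above and weakly to the left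
of each of `a, b, c` do not come after it. -/
theorem exists_pos_of_order {a b c : ℕ × ℕ} (ha : a ∈ μ) (hb : b ∈ μ) (hcm : c ∈ μ)
    (h0 : (0, 0) ≠ a ∧ (0, 0) ≠ b ∧ (0, 0) ≠ c ∧ a ≠ b ∧ a ≠ c ∧ b ≠ c)
    (hlow : ∀ p : ℕ × ℕ, (p ≤ a → p = (0, 0) ∨ p = a) ∧ (p ≤ b → p = (0, 0) ∨ p = a ∨ p = b) ∧
      (p ≤ c → p = (0, 0) ∨ p = a ∨ p = b ∨ p = c)) :
    ∃ T : SYT μ, Pos T a b c := by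
  classical
  obtain ⟨n1, n2, n3, n4, n5, n6⟩ := h0
  let w : ℕ × ℕ → ℕ := fun p => if p = (0, 0) then 0 else if p = a then 1 else if p = b then 2
    else if p = c then 3 else 4 + Nat.pair p.1 p.2
  have w0 : w (0, 0) = 0 := by simp [w]
  have wa : w a = 1 := by simp [w, n1.symm]
  have wb : w b = 2 := by simp [w, n2.symm, n4.symm]
  have wc : w c = 3 := by simp [w, n3.symm, n5.symm, n6.symm]
  have wcase : ∀ p, p = (0, 0) ∨ p = a ∨ p = b ∨ p = c ∨ w p = 4 + Nat.pair p.1 p.2 := by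
    intro p
    simp only [w]
    split_ifs <;> simp_all
  have hw : Function.Injective w := by
    intro p q hpq
    rcases wcase p with rfl | rfl | rfl | rfl | hp <;>
      rcases wcase q with rfl | rfl | rfl | rfl | hq <;> first | rfl | omega | skip
    have : Nat.pair p.1 p.2 = Nat.pair q.1 q.2 := by omega
    have := Nat.pair_eq_pair.1 this
    exact Prod.ext this.1 this.2
  have hmono : ∀ p q : ℕ × ℕ, p ≤ q → p ≠ q → Nat.pair p.1 p.2 < Nat.pair q.1 q.2 →
      w p < w q := by
    intro p q hle hne hlt
    rcases wcase q with rfl | rfl | rfl | rfl | hq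
    · exact absurd (le_antisymm hle ⟨Nat.zero_le _, Nat.zero_le _⟩) hne
    · rcases (hlow p).1 hle with rfl | rfl
      · omega
      · exact absurd rfl hne
    · rcases (hlow p).2.1 hle with rfl | rfl | rfl
      · omega
      · omega
      · exact absurd rfl hne
    · rcases (hlow p).2.2 hle with rfl | rfl | rfl | rfl
      · omega
      · omega
      · omega
      · exact absurd rfl hne
    · rcases wcase p with rfl | rfl | rfl | rfl | hp <;> omega
  have h00 : (0, 0) ∈ μ := μ.up_left_mem (Nat.zero_le a.1) (Nat.zero_le a.2) ha
  obtain ⟨T, hT⟩ := exists_of_weight (μ := μ) w hw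
    (fun i j1 j2 hj => hmono _ _ ⟨le_rfl, hj.le⟩ (by simp [hj.ne]) (Nat.pair_lt_pair_right i hj))
    (fun i1 i2 j hi => hmono _ _ ⟨hi.le, le_rfl⟩ (by simp [hi.ne]) (Nat.pair_lt_pair_left j hi))
  have hv : ∀ v ≤ 3, ∃ q ∈ μ, w q = v := by
    intro v hv
    interval_cases v
    exacts [⟨_, h00, w0⟩, ⟨_, ha, wa⟩, ⟨_, hb, wb⟩, ⟨_, hcm, wc⟩]
  refine ⟨T, ?_, ?_, ?_⟩
  · rw [hT a ha fun v h => hv v (by omega), wa]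
  · rw [hT b hb fun v h => hv v (by omega), wb]
  · rw [hT c hcm fun v h => hv v (by omega), wc]

theorem exists_type_square (h11 : (1, 1) ∈ μ) : ∃ T : SYT μ, Pos T (0, 1) (1, 0) (1, 1) := by
  refine exists_pos_of_order (μ.up_left_mem (by norm_num) le_rfl h11)
    (μ.up_left_mem le_rfl (by norm_num) h11) h11 (by simp) ?_
  rintro ⟨i, j⟩
  simp only [Prod.mk_le_mk, Prod.mk.injEq]
  omega

/-- If `μ` is neither hook-shaped nor the `2 × 2` square, some tableau has its entries `1, …, 4` in
shape `(3,1)` or `(2,1,1)`, with the entry `2` on the short arm. -/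
theorem exists_type_bent (h11 : (1, 1) ∈ μ) (hst : μ.transpose ≠ μ) :
    ∃ (T : SYT μ) (a b c : ℕ × ℕ), Pos T a b c ∧ ¬ Collinear2 a b ∧ Collinear2 b c ∧
      ¬ Collinear2 a c := by
  have h01 : (0, 1) ∈ μ := μ.up_left_mem (by norm_num) le_rfl h11
  have h10 : (1, 0) ∈ μ := μ.up_left_mem le_rfl (by norm_num) h11
  by_cases h02 : (0, 2) ∈ μ
  · obtain ⟨T, hT⟩ : ∃ T : SYT μ, Pos T (1, 0) (0, 1) (0, 2) := by
      refine exists_pos_of_order h10 h01 h02 (by simp) ?_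
      rintro ⟨i, j⟩
      simp only [Prod.mk_le_mk, Prod.mk.injEq]
      omega
    exact ⟨T, _, _, _, hT, by simp [Collinear2]⟩
  by_cases h20 : (2, 0) ∈ μ
  · obtain ⟨T, hT⟩ : ∃ T : SYT μ, Pos T (0, 1) (1, 0) (2, 0) := by
      refine exists_pos_of_order h01 h10 h20 (by simp) ?_
      rintro ⟨i, j⟩
      simp only [Prod.mk_le_mk, Prod.mk.injEq]
      omega
    exact ⟨T, _, _, _, hT, by simp [Collinear2]⟩
  -- Otherwise `μ` is the `2 × 2` square, which is self-transpose.
  exfalso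
  have hmem : ∀ i j, (i, j) ∈ μ ↔ i ≤ 1 ∧ j ≤ 1 := by
    intro i j
    constructor
    · intro h
      constructor
      · by_contra hi
        exact h20 (μ.up_left_mem (by omega) (Nat.zero_le j) h)
      · by_contra hj
        exact h02 (μ.up_left_mem (Nat.zero_le i) (by omega) h)
    · rintro ⟨hi, hj⟩
      exact μ.up_left_mem hi hj h11
  apply hst
  ext ⟨i, j⟩
  simp only [YoungDiagram.mem_cells, YoungDiagram.mem_transpose, Prod.swap_prod_mk, hmem]
  exact and_comm

/-- Theorem. Let `μ` be a partition of `n` that is not hook-shaped and not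
self-transpose, with `|SYT(μ)| = 2 ^ d`. Then under no bijection `SYT(μ) ≃ 𝔽₂^d` do
all the Bender–Knuth involutions `t_1, …, t_{n-1}` act as affine transformations;
i.e. the image of `C_n` is never contained in `AGL(d, 2)`. -/
theorem image_not_affine (n d : ℕ) (μ : YoungDiagram) (hμ : μ.card = n)
    (hh : ¬ HookShaped μ) (hst : μ.transpose ≠ μ)
    (hcard : Nat.card (SYT μ) = 2 ^ d) :
    ¬ ∃ φ : SYT μ ≃ (Fin d → ZMod 2),
        ∀ i ∈ Finset.Icc 1 (n - 1),
          ∃ (L : (Fin d → ZMod 2) ≃ₗ[ZMod 2] (Fin d → ZMod 2)) (v : Fin d → ZMod 2),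
            ∀ A : SYT μ, φ (BK μ i A) = L (φ A) + v := by
  rintro ⟨φ, hφ⟩
  have h11 : (1, 1) ∈ μ := not_not.1 hh
  obtain ⟨Y, hY⟩ := exists_type_square h11
  obtain ⟨X, a, b, c, hX, hab, hbc, hac⟩ := exists_type_bent h11 hst
  have hn : 4 ≤ μ.card := by
    have := (Y.entry_mem h11).2
    rwa [hY.2.2] at this
  have h2 : ∀ v : Fin d → ZMod 2, v + v = 0 := fun v => funext fun i => CharTwo.add_self_eq_zero (v i)
  obtain ⟨L2, v2, hL2⟩ := hφ 2 (by simp; omega)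
  obtain ⟨L3, v3, hL3⟩ := hφ 3 (by simp; omega)
  have hs : ∀ x, φ (bkStep μ (φ.symm x)) = L2 (L3 x + v3) + v2 := by
    intro x
    rw [bkStep, hL2, hL3, φ.apply_symm_apply]
  refine no_ternary_affine (fun x => φ (bkStep μ (φ.symm x))) ?_ ?_ (φ X) (φ Y) ?_ ?_
  · intro x y z
    simp only [hs, map_add]
    -- The two sides differ by twice a vector.
    have e : L2 v3 + v2 + (L2 v3 + v2) = 0 := h2 _
    calc L2 (L3 x) + L2 (L3 y) + L2 (L3 z) + L2 v3 + v2
        = L2 (L3 x) + L2 (L3 y) + L2 (L3 z) + L2 v3 + v2 + (L2 v3 + v2 + (L2 v3 + v2)) := by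
          rw [e, add_zero]
      _ = _ := by abel
  · intro x
    simp only [φ.symm_apply_apply, ← φ.eq_symm_apply]
    exact sq_or_cube hn _
  · simpa using (hX.period_bent2 hab hbc hac).2
  · simpa using (hY.period_square (by simp [Collinear2]) (by simp [Collinear2])
      (by simp [Collinear2])).2
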